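/- arXiv:2209.02607 — 2 statements merged into one kernel-verified Lean document; each statement's English description precedes it below -/
import Mathlib

section
/- Let L be a first-order language (of arbitrary cardinality) and let M be a countable L-structure that is full, i.e., such that for every n ∈ ℕ, every subset of Mⁿ invariant under all automorphisms of M is definable in M without parameters. Then M is ℵ₀-categorical: every countable model of the complete first-order theory Th(M) is isomorphic to M. -/
open FirstOrder FirstOrder.Language

/-!
Two elementarily equivalent countable atomic structures are isomorphic, so it suffices that every
countable model `N` of the theory of a full structure `M` is atomic. Types realized in `M` are
isolated, because the set of their realizations is automorphism-invariant; so we must show that `N`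
realizes no further type.

Since the types realized in `M` are isolated, a formula that belongs to only finitely many of them
can hold in `N` only of tuples realizing one of these. Hence, if `b` in `N` realizes a new type,
the set `Q` of types realized in `M` is infinite; it is countable because `N` realizes them all.
Choose continuum many functions `Q → Q`, any two of which agree at finitely many points only. By
fullness each is defined by a formula, and in `N` these formulas relate `b` to pairwise distinct
tuples: a common value at `b` for two of the functions would put `b` into the set where they agree.
This contradicts the countability of `N`.
-/

theorem exists_pairwise_eventually_ne (Q : Type*) [Countable Q] [Infinite Q] :
    ∃ f : Set ℕ → Q → Q, Pairwise fun A B => ∀ᶠ q in Filter.cofinite, f A q ≠ f B q := by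
  classical
  obtain ⟨position⟩ : Nonempty (Q ≃ ℕ) := nonempty_equiv_of_countable
  obtain ⟨code⟩ : Nonempty (Finset ℕ ≃ Q) := nonempty_equiv_of_countable
  refine ⟨fun A q => code {i ∈ Finset.range (position q) | i ∈ A}, fun A B hAB => ?_⟩
  obtain ⟨i, hi⟩ : ∃ i, ¬(i ∈ A ↔ i ∈ B) := by
    by_contra! h
    exact hAB (Set.ext h)
  have late : ∀ᶠ q in Filter.cofinite, i < position q :=
    position.injective.tendsto_cofinite.eventually
      (Nat.cofinite_eq_atTop ▸ Filter.eventually_gt_atTop i)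
  filter_upwards [late] with q hq hfq
  have hmem := Finset.ext_iff.1 (code.injective hfq) i
  simp only [Finset.mem_filter, Finset.mem_range, hq, true_and] at hmem
  exact hi hmem

section

variable {L : FirstOrder.Language} {M N : Type*} [L.Structure M] [L.Structure N] {α β : Type*}

theorem elementarilyEquivalent_of_model_completeTheory [N ⊨ L.completeTheory M] :
    M ≅[L] N :=
  elementarilyEquivalent_iff.2 fun φ => (realize_iff_of_model_completeTheory M N φ).symm

theorem forall_realize_iff_of_elementarilyEquivalent [Finite α] (h : M ≅[L] N)
    (φ : L.Formula α) : (∀ v : α → M, φ.Realize v) ↔ ∀ w : α → N, φ.Realize w := by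
  have closure_iff := h.realize_sentence
    ((φ.relabel (Sum.inr : α → Empty ⊕ α)).iAlls α)
  simpa only [Sentence.Realize, Formula.realize_iAlls, Formula.realize_relabel,
    Function.comp_def, Sum.elim_inr] using closure_iff

/-- The complete type over `∅` of a tuple. Being a set of formulas that does not mention the
ambient structure, it allows tuples of different structures to be compared by equality. -/
def tp (L : FirstOrder.Language) {M α : Type*} [L.Structure M] (a : α → M) : Set (L.Formula α) :=
  {φ | φ.Realize a}

theorem mem_tp {φ : L.Formula α} {a : α → M} : φ ∈ tp L a ↔ φ.Realize a := Iff.rfl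

theorem tp_comp (a : α → M) (σ : β → α) :
    tp L (a ∘ σ) = Formula.relabel σ ⁻¹' tp L a :=
  Set.ext fun _ => Formula.realize_relabel.symm

theorem tp_equiv_comp (g : M ≃[L] N) (a : α → M) : tp L (g ∘ a) = tp L a :=
  Set.ext fun φ => StrongHomClass.realize_formula g φ

theorem tp_eq_of_forall_exists {a : α → M} {b : α → N} (h : tp L a = tp L b)
    {a' : β → M} {b' : β → N} (hab : ∀ j, ∃ i, a i = a' j ∧ b i = b' j) :
    tp L a' = tp L b' := by
  choose σ ha hb using hab
  rw [← funext ha, ← funext hb]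
  exact (tp_comp a σ).trans ((congrArg _ h).trans (tp_comp b σ).symm)

theorem eq_iff_eq_of_tp_eq {a : α → M} {b : α → N} (h : tp L a = tp L b) (i j : α) :
    a i = a j ↔ b i = b j := by
  simpa only [mem_tp, Formula.realize_equal, Term.realize_var] using
    Set.ext_iff.1 h ((Term.var i : L.Term α).equal (Term.var j))

theorem tp_eq_of_subset {a : α → M} {b : α → N} (h : tp L a ⊆ tp L b) : tp L a = tp L b :=
  h.antisymm fun φ hb => by_contra fun ha => h (a := φ.not) ha hb

theorem tp_eq_of_isEmpty [IsEmpty α] (h : M ≅[L] N) (a : α → M) (b : α → N) :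
    tp L a = tp L b := by
  refine tp_eq_of_subset fun φ ha => ?_
  exact (forall_realize_iff_of_elementarilyEquivalent h φ).1
    (fun v => Subsingleton.elim a v ▸ ha) b

/-- The complete types realized in `M` by tuples indexed by `α`. -/
def realizedTypes (L : FirstOrder.Language) (M α : Type*) [L.Structure M] :
    Set (Set (L.Formula α)) :=
  Set.range (tp L : (α → M) → Set (L.Formula α))

/-- The complete type of a tuple, as an element of `realizedTypes`. -/
def realizedType (L : FirstOrder.Language) {M α : Type*} [L.Structure M] (a : α → M) :
    realizedTypes L M α :=
  ⟨tp L a, a, rfl⟩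

theorem realizedType_equiv_comp (g : M ≃[L] M) (a : α → M) :
    realizedType L (g ∘ a) = realizedType L a :=
  Subtype.ext (tp_equiv_comp g a)

theorem countable_realizedTypes [Finite α] [Countable M] : (realizedTypes L M α).Countable :=
  Set.countable_range _

/-- The formula `φ` isolates the type of `a`: it defines in `M` the set of all tuples realizing
this type. -/
def Isolates (φ : L.Formula α) (a : α → M) : Prop :=
  ∀ v : α → M, φ.Realize v ↔ tp L v = tp L a

theorem Isolates.tp_eq [Finite α] {φ : L.Formula α} {a : α → M} (hφ : Isolates φ a)
    (h : M ≅[L] N) {b : α → N} (hb : φ.Realize b) : tp L a = tp L b := by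
  refine tp_eq_of_subset fun ψ hψ => ?_
  have imp_in_M : ∀ v : α → M, (φ.imp ψ).Realize v := fun v =>
    Formula.realize_imp.2 fun hv => mem_tp.1 ((hφ v).1 hv ▸ hψ)
  exact Formula.realize_imp.1 ((forall_realize_iff_of_elementarilyEquivalent h _).1 imp_in_M b) hb

theorem Isolates.of_tp_eq [Finite α] {φ : L.Formula α} {a : α → M} (hφ : Isolates φ a)
    (h : M ≅[L] N) {b : α → N} (hab : tp L a = tp L b) : Isolates φ b := fun w => by
  rw [← hab]
  refine ⟨fun hw => (hφ.tp_eq h hw).symm, fun hw => ?_⟩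
  exact mem_tp.1 (hw ▸ mem_tp.2 ((hφ a).2 rfl))

theorem Isolates.relabel {φ : L.Formula α} (e : α ≃ β) {a : β → M} (hφ : Isolates φ (a ∘ e)) :
    Isolates (φ.relabel e) a := fun v => by
  rw [Formula.realize_relabel, hφ, tp_comp, tp_comp]
  refine ⟨fun h => ?_, congrArg _⟩
  exact tp_eq_of_forall_exists (a := v ∘ e) (b := a ∘ e) (by rw [tp_comp, tp_comp, h])
    fun j => ⟨e.symm j, by simp⟩

/-- Every type of a finite tuple of `M` is isolated. -/
def IsAtomicStructure (L : FirstOrder.Language) (M : Type*) [L.Structure M] : Prop :=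
  ∀ (n : ℕ) (a : Fin n → M), ∃ φ : L.Formula (Fin n), Isolates φ a

namespace IsAtomicStructure

theorem exists_isolates [Finite α] (hM : IsAtomicStructure L M) (a : α → M) :
    ∃ φ : L.Formula α, Isolates φ a := by
  obtain ⟨n, ⟨e⟩⟩ := Finite.exists_equiv_fin α
  obtain ⟨φ, hφ⟩ := hM n (a ∘ e.symm)
  exact ⟨φ.relabel e.symm, hφ.relabel e.symm⟩

theorem exists_tp_elim_eq [Finite α] [Finite β] (hM : IsAtomicStructure L M) (h : M ≅[L] N)
    {a : α → M} {b : α → N} (hab : tp L a = tp L b) (c : β → M) :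
    ∃ d : β → N, tp L (Sum.elim a c) = tp L (Sum.elim b d) := by
  obtain ⟨φ, hφ⟩ := hM.exists_isolates (Sum.elim a c)
  have ha : φ.iExs β ∈ tp L a := Formula.realize_iExs.2 ⟨c, (hφ _).2 rfl⟩
  obtain ⟨d, hd⟩ := Formula.realize_iExs.1 (mem_tp.1 (hab ▸ ha))
  exact ⟨d, hφ.tp_eq h hd⟩

theorem realizedTypes_subset [Finite α] (hM : IsAtomicStructure L M) (h : M ≅[L] N) :
    realizedTypes L M α ⊆ realizedTypes L N α := by
  rintro _ ⟨a, rfl⟩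
  obtain ⟨b, hab⟩ := hM.exists_tp_elim_eq h (tp_eq_of_isEmpty h Empty.elim Empty.elim) a
  exact ⟨b, (tp_eq_of_forall_exists hab fun j => ⟨Sum.inr j, rfl, rfl⟩).symm⟩

theorem of_realizedTypes_subset (hM : IsAtomicStructure L M) (h : M ≅[L] N)
    (hsub : ∀ n : ℕ, realizedTypes L N (Fin n) ⊆ realizedTypes L M (Fin n)) :
    IsAtomicStructure L N := fun n b => by
  obtain ⟨a, hab⟩ := hsub n ⟨b, rfl⟩
  obtain ⟨φ, hφ⟩ := hM n a
  exact ⟨φ, hφ.of_tp_eq h hab⟩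

theorem tp_mem_realizedTypes_of_finite [Finite α] (hM : IsAtomicStructure L M) (h : M ≅[L] N)
    {ψ : L.Formula α} (hψ : {p ∈ realizedTypes L M α | ψ ∈ p}.Finite)
    {b : α → N} (hb : ψ.Realize b) : tp L b ∈ realizedTypes L M α := by
  choose φ hφ using fun a : α → M => hM.exists_isolates a
  have := hψ.to_subtype
  choose a ha using fun p : {p ∈ realizedTypes L M α | ψ ∈ p} => p.2.1
  have covered : ∀ v : α → M, (ψ.imp (Formula.iSup fun p => φ (a p))).Realize v := fun v => by
    rw [Formula.realize_imp, Formula.realize_iSup]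
    exact fun hv => ⟨_, (hφ _ v).2 (ha ⟨tp L v, ⟨v, rfl⟩, hv⟩).symm⟩
  have covered_b := (forall_realize_iff_of_elementarilyEquivalent h _).1 covered b
  rw [Formula.realize_imp, Formula.realize_iSup] at covered_b
  obtain ⟨p, hp⟩ := covered_b hb
  exact ⟨a p, (hφ _).tp_eq h hp⟩

end IsAtomicStructure

/-- A relation between `M` and `N` is elementary if corresponding finite tuples have the same
type. Such a relation is the graph of an elementary bijection between its projections. -/
def IsElementaryRel (L : FirstOrder.Language) {M N : Type*} [L.Structure M] [L.Structure N]
    (U : Set (M × N)) : Prop :=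
  ∀ (n : ℕ) (x : Fin n → M × N), (∀ i, x i ∈ U) →
    tp L (fun i => (x i).1) = tp L (fun i => (x i).2)

namespace IsElementaryRel

theorem empty (h : M ≅[L] N) : IsElementaryRel L (∅ : Set (M × N)) := fun _ _ hx =>
  have : IsEmpty _ := ⟨hx⟩
  tp_eq_of_isEmpty h _ _

theorem tp_eq [Finite α] {U : Set (M × N)} (hU : IsElementaryRel L U) {x : α → M × N}
    (hx : ∀ i, x i ∈ U) : tp L (fun i => (x i).1) = tp L (fun i => (x i).2) := by
  obtain ⟨n, ⟨e⟩⟩ := Finite.exists_equiv_fin α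
  exact tp_eq_of_forall_exists (hU n (x ∘ e.symm) fun i => hx _) fun j => ⟨e j, by simp⟩

theorem insert_of_tp_eq {U : Set (M × N)} {c : Unit → M} {d : Unit → N}
    (h : tp L (Sum.elim (fun p : U => p.1.1) c) = tp L (Sum.elim (fun p : U => p.1.2) d)) :
    IsElementaryRel L (insert (c (), d ()) U) := fun n x hx =>
  tp_eq_of_forall_exists h fun j => by
    obtain hj | hj := hx j
    · exact ⟨Sum.inr (), by simp [hj]⟩
    · exact ⟨Sum.inl ⟨x j, hj⟩, rfl, rfl⟩

theorem iUnion_of_directed {ι : Type*} [Nonempty ι] {U : ι → Set (M × N)}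
    (hdir : Directed (· ⊆ ·) U) (hU : ∀ k, IsElementaryRel L (U k)) :
    IsElementaryRel L (⋃ k, U k) := fun n x hx => by
  choose k hk using fun i => Set.mem_iUnion.1 (hx i)
  obtain ⟨m, hm⟩ := hdir.finite_le k
  exact hU m n x fun i => hm i (hk i)

theorem nonempty_equiv {U : Set (M × N)} (hU : IsElementaryRel L U)
    (hdom : ∀ m, ∃ n, (m, n) ∈ U) (hcod : ∀ n, ∃ m, (m, n) ∈ U) : Nonempty (M ≃[L] N) := by
  choose f hf using hdom
  let F : M ↪ₑ[L] N :=
    ⟨f, fun k φ v => (Set.ext_iff.1 (hU k (fun i => (v i, f (v i))) fun i => hf _) φ).symm⟩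
  have surjective : Function.Surjective F := fun n => by
    obtain ⟨m, hm⟩ := hcod n
    have same_type := hU 2 ![(m, f m), (m, n)] (Fin.forall_fin_two.2 ⟨hf m, hm⟩)
    exact ⟨m, (eq_iff_eq_of_tp_eq same_type 0 1).1 rfl⟩
  exact ⟨{ _root_.Equiv.ofBijective F ⟨F.injective, surjective⟩ with
    map_fun' := F.map_fun
    map_rel' := F.map_rel }⟩

end IsElementaryRel

/-- The finite elementary relations between `M` and `N`, ordered by inclusion: the approximations
to an isomorphism in a back-and-forth construction. -/
abbrev FiniteElementaryRel (L : FirstOrder.Language) (M N : Type*) [L.Structure M]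
    [L.Structure N] : Type _ :=
  {s : Finset (M × N) // IsElementaryRel L (s : Set (M × N))}

namespace FiniteElementaryRel

theorem exists_le_of_tp_eq (s : FiniteElementaryRel L M N) {c : Unit → M} {d : Unit → N}
    (h : tp L (Sum.elim (fun p : s.1 => p.1.1) c) = tp L (Sum.elim (fun p : s.1 => p.1.2) d)) :
    ∃ t : FiniteElementaryRel L M N, (c (), d ()) ∈ t.1 ∧ s ≤ t := by
  classical
  refine ⟨⟨insert (c (), d ()) s.1, ?_⟩, Finset.mem_insert_self _ _, Finset.subset_insert _ _⟩
  rw [Finset.coe_insert]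
  exact IsElementaryRel.insert_of_tp_eq h

theorem isCofinal_setOf_mem_dom (hM : IsAtomicStructure L M) (h : M ≅[L] N) (m : M) :
    IsCofinal {s : FiniteElementaryRel L M N | ∃ n, (m, n) ∈ s.1} := fun s => by
  obtain ⟨d, hd⟩ := hM.exists_tp_elim_eq h (s.2.tp_eq fun p : s.1 => p.2) fun _ : Unit => m
  obtain ⟨t, ht, hst⟩ := s.exists_le_of_tp_eq hd
  exact ⟨t, ⟨d (), ht⟩, hst⟩

theorem isCofinal_setOf_mem_cod (hN : IsAtomicStructure L N) (h : M ≅[L] N) (n : N) :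
    IsCofinal {s : FiniteElementaryRel L M N | ∃ m, (m, n) ∈ s.1} := fun s => by
  obtain ⟨c, hc⟩ := hN.exists_tp_elim_eq h.symm (s.2.tp_eq fun p : s.1 => p.2).symm
    fun _ : Unit => n
  obtain ⟨t, ht, hst⟩ := s.exists_le_of_tp_eq hc.symm
  exact ⟨t, ⟨c (), ht⟩, hst⟩

end FiniteElementaryRel

theorem IsAtomicStructure.nonempty_equiv [Countable M] [Countable N]
    (hM : IsAtomicStructure L M) (hN : IsAtomicStructure L N) (h : M ≅[L] N) :
    Nonempty (M ≃[L] N) := by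
  have := Encodable.ofCountable M
  have := Encodable.ofCountable N
  let start : FiniteElementaryRel L M N := ⟨∅, by simpa using IsElementaryRel.empty h⟩
  let requirement : M ⊕ N → Order.Cofinal (FiniteElementaryRel L M N) := Sum.elim
    (fun m => ⟨_, FiniteElementaryRel.isCofinal_setOf_mem_dom hM h m⟩)
    (fun n => ⟨_, FiniteElementaryRel.isCofinal_setOf_mem_cod hN h n⟩)
  let S := Order.sequenceOfCofinals start requirement
  have monotone : Monotone fun k => ((S k).1 : Set (M × N)) :=
    fun _ _ hkl => Order.sequenceOfCofinals.monotone start requirement hkl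
  have elementary : IsElementaryRel L (⋃ k, ((S k).1 : Set (M × N))) :=
    .iUnion_of_directed monotone.directed_le fun k => (S k).2
  have met (i : M ⊕ N) : S (Encodable.encode i + 1) ∈ requirement i :=
    Order.sequenceOfCofinals.encode_mem start requirement i
  refine elementary.nonempty_equiv (fun m => ?_) (fun n => ?_)
  · obtain ⟨n, hn⟩ := met (Sum.inl m)
    exact ⟨n, Set.mem_iUnion.2 ⟨_, hn⟩⟩
  · obtain ⟨m, hm⟩ := met (Sum.inr n)
    exact ⟨m, Set.mem_iUnion.2 ⟨_, hm⟩⟩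

/-- The formula `ρ` defines in `M` the graph of the function `f` on realized types. -/
def DefinesOnTypes (ρ : L.Formula (α ⊕ α)) (f : realizedTypes L M α → realizedTypes L M α) :
    Prop :=
  ∀ x y : α → M, ρ.Realize (Sum.elim x y) ↔ f (realizedType L x) = realizedType L y

namespace DefinesOnTypes

variable {f f' : realizedTypes L M α → realizedTypes L M α} {ρ ρ' : L.Formula (α ⊕ α)}

theorem exists_realize [Finite α] (hρ : DefinesOnTypes ρ f) (h : M ≅[L] N) (b : α → N) :
    ∃ y : α → N, ρ.Realize (Sum.elim b y) := by
  have total : ∀ x : α → M, (ρ.iExs α).Realize x := fun x => by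
    obtain ⟨y, hy⟩ := (f (realizedType L x)).2
    exact Formula.realize_iExs.2 ⟨y, (hρ x y).2 (Subtype.ext hy.symm)⟩
  exact Formula.realize_iExs.1 ((forall_realize_iff_of_elementarilyEquivalent h _).1 total b)

theorem ne_of_eventually_ne [Finite α] (hρ : DefinesOnTypes ρ f) (hρ' : DefinesOnTypes ρ' f')
    (hM : IsAtomicStructure L M) (h : M ≅[L] N) (hff' : ∀ᶠ q in Filter.cofinite, f q ≠ f' q)
    {b y y' : α → N} (hb : tp L b ∉ realizedTypes L M α)
    (hy : ρ.Realize (Sum.elim b y)) (hy' : ρ'.Realize (Sum.elim b y')) : y ≠ y' := by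
  rintro rfl
  let agree : L.Formula α := (ρ ⊓ ρ').iExs α
  have finite_agree : {q | f q = f' q}.Finite := by
    simpa only [Filter.eventually_cofinite, not_not] using hff'
  refine hb (hM.tp_mem_realizedTypes_of_finite h (ψ := agree) ?_ ?_)
  · refine (finite_agree.image Subtype.val).subset ?_
    rintro _ ⟨⟨x, rfl⟩, hx⟩
    obtain ⟨z, hz⟩ := Formula.realize_iExs.1 (mem_tp.1 hx)
    rw [Formula.realize_inf, hρ, hρ'] at hz
    exact ⟨realizedType L x, hz.1.trans hz.2.symm, rfl⟩
  · exact Formula.realize_iExs.2 ⟨y, Formula.realize_inf.2 ⟨hy, hy'⟩⟩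

end DefinesOnTypes

/-- Every automorphism-invariant set of finite tuples of `M` is definable without parameters. -/
def IsFullStructure (L : FirstOrder.Language) (M : Type*) [L.Structure M] : Prop :=
  ∀ (n : ℕ) (s : Set (Fin n → M)),
    (∀ (g : M ≃[L] M) (v : Fin n → M), v ∈ s ↔ g ∘ v ∈ s) → (∅ : Set M).Definable L s

namespace IsFullStructure

theorem exists_formula [Finite α] (hM : IsFullStructure L M) (s : Set (α → M))
    (hs : ∀ (g : M ≃[L] M) (v : α → M), v ∈ s ↔ g ∘ v ∈ s) :
    ∃ φ : L.Formula α, ∀ v, φ.Realize v ↔ v ∈ s := by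
  obtain ⟨n, ⟨e⟩⟩ := Finite.exists_equiv_fin α
  have transported := (hM n ((· ∘ e) ⁻¹' s) fun g v => hs g (v ∘ e)).preimage_comp e.symm
  obtain ⟨φ, hφ⟩ := Set.empty_definable_iff.1 transported
  refine ⟨φ, fun v => ?_⟩
  simpa [Function.comp_assoc] using (Set.ext_iff.1 hφ v).symm

theorem isAtomicStructure (hM : IsFullStructure L M) : IsAtomicStructure L M := fun _ a =>
  hM.exists_formula {v | tp L v = tp L a} fun g v => by
    simp only [Set.mem_ofPred_eq, tp_equiv_comp]

theorem exists_definesOnTypes [Finite α] (hM : IsFullStructure L M)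
    (f : realizedTypes L M α → realizedTypes L M α) :
    ∃ ρ : L.Formula (α ⊕ α), DefinesOnTypes ρ f := by
  obtain ⟨ρ, hρ⟩ := hM.exists_formula
    {v | f (realizedType L (v ∘ Sum.inl)) = realizedType L (v ∘ Sum.inr)} fun g v => by
      simp only [Set.mem_ofPred_eq, Function.comp_assoc, realizedType_equiv_comp]
  exact ⟨ρ, fun x y => hρ (Sum.elim x y)⟩

theorem realizedTypes_subset [Finite α] [Countable N] (hM : IsFullStructure L M)
    (h : M ≅[L] N) : realizedTypes L N α ⊆ realizedTypes L M α := by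
  rintro _ ⟨b, rfl⟩
  by_contra hb
  have atomic := hM.isAtomicStructure
  have : Countable (realizedTypes L M α) :=
    (countable_realizedTypes.mono (atomic.realizedTypes_subset h)).to_subtype
  have : Infinite (realizedTypes L M α) := not_finite_iff_infinite.1 fun hfin =>
    hb (atomic.tp_mem_realizedTypes_of_finite h (ψ := ⊤)
      (Set.Finite.subset hfin (Set.sep_subset _ _)) (Formula.realize_top.2 trivial))
  obtain ⟨f, hf⟩ := exists_pairwise_eventually_ne (realizedTypes L M α)
  choose ρ hρ using fun A => hM.exists_definesOnTypes (f A)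
  choose y hy using fun A => (hρ A).exists_realize h b
  have y_injective : Function.Injective y := fun A B => not_imp_not.1 fun hAB =>
    (hρ A).ne_of_eventually_ne (hρ B) atomic h (hf hAB) hb (hy A) (hy B)
  obtain ⟨code, code_injective⟩ := exists_injective_nat (α → N)
  exact Function.cantor_injective (code ∘ y) (code_injective.comp y_injective)

theorem isAtomicStructure_of_elementarilyEquivalent [Countable N] (hM : IsFullStructure L M)
    (h : M ≅[L] N) : IsAtomicStructure L N :=
  hM.isAtomicStructure.of_realizedTypes_subset h fun _ => hM.realizedTypes_subset h

end IsFullStructure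

end

theorem aleph0_categorical_of_full_general {L : FirstOrder.Language} {M N P : Type*}
    [L.Structure M] [L.Structure N] [Countable N] [L.Structure P] [Countable P]
    (hM : IsFullStructure L M) (hN : M ≅[L] N) (hP : M ≅[L] P) : Nonempty (N ≃[L] P) :=
  (hM.isAtomicStructure_of_elementarilyEquivalent hN).nonempty_equiv
    (hM.isAtomicStructure_of_elementarilyEquivalent hP) (hN.symm.trans hP)

/-- A countable structure (in a language of arbitrary cardinality) that is full —
i.e. every automorphism-invariant subset of `Mⁿ` is definable without parameters —
is `ℵ₀`-categorical: every countable model of its complete theory is isomorphic to it. -/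
theorem aleph0_categorical_of_full {L : FirstOrder.Language} {M : Type*}
    [L.Structure M] [Countable M]
    (hfull : ∀ (n : ℕ) (s : Set (Fin n → M)),
      (∀ (g : M ≃[L] M) (v : Fin n → M), v ∈ s ↔ (g ∘ v) ∈ s) →
      ∃ φ : L.Formula (Fin n), s = {v | φ.Realize v}) :
    ∀ (N : Type*) [L.Structure N] [Countable N],
      N ⊨ L.completeTheory M → Nonempty (M ≃[L] N) := by
  intro N _ _ _
  have full : IsFullStructure L M := fun n s hs => Set.empty_definable_iff.2 (hfull n s hs)
  exact aleph0_categorical_of_full_general full rfl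
    elementarilyEquivalent_of_model_completeTheory
end

section
/- Let L be a first-order language (of arbitrary cardinality) and let M be a countable L-structure that is qf-full, i.e., such that for every n ∈ ℕ, every subset of Mⁿ invariant under all automorphisms of M is definable in M by a quantifier-free formula without parameters. Then M is ultrahomogeneous: every isomorphism between finitely generated substructures of M extends to an automorphism of M. -/
open FirstOrder FirstOrder.Language

/-!
Given an isomorphism `f : S ≃[L] T`, let `w` be a finite tuple generating `S`. Its orbit under
the automorphisms of `M` is invariant, hence defined by a quantifier-free formula. Embeddings
preserve and reflect such formulas, so `f ∘ w` lies in the orbit of `w`: a single automorphism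
agrees with `f` on all the generators of `S`, hence on `S`.
-/

section TupleOrbit

variable (L : FirstOrder.Language) {M ι : Type*} [L.Structure M]

/-- The orbit of a tuple `a` of elements of `M` under the diagonal action of the automorphisms of
`M`. It is the smallest automorphism-invariant set of tuples containing `a`. -/
def tupleOrbit (a : ι → M) : Set (ι → M) :=
  Set.range fun g : M ≃[L] M ↦ g ∘ a

variable {L}

lemma self_mem_tupleOrbit (a : ι → M) : a ∈ tupleOrbit L a :=
  ⟨Language.Equiv.refl L M, rfl⟩

lemma comp_mem_tupleOrbit {a v : ι → M} (hv : v ∈ tupleOrbit L a) (g : M ≃[L] M) :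
    g ∘ v ∈ tupleOrbit L a := by
  obtain ⟨k, rfl⟩ := hv
  exact ⟨g.comp k, rfl⟩

lemma comp_mem_tupleOrbit_iff {a v : ι → M} (g : M ≃[L] M) :
    g ∘ v ∈ tupleOrbit L a ↔ v ∈ tupleOrbit L a := by
  refine ⟨fun hgv ↦ ?_, fun hv ↦ comp_mem_tupleOrbit hv g⟩
  have hv : g.symm ∘ g ∘ v = v := funext fun i ↦ g.symm_apply_apply (v i)
  exact hv ▸ comp_mem_tupleOrbit hgv g.symm

end TupleOrbit

section SameQFType

variable (L : FirstOrder.Language) {M N P ι : Type*}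
  [L.Structure M] [L.Structure N] [L.Structure P]

/-- The tuples `a` and `b`, possibly taken from different structures, have the same quantifier-free
type over the empty set: they satisfy the same quantifier-free formulas without parameters. -/
def SameQFType (a : ι → M) (b : ι → N) : Prop :=
  ∀ φ : L.Formula ι, φ.IsQF → (φ.Realize a ↔ φ.Realize b)

variable {L}

lemma realize_comp_embedding_iff_of_isQF {φ : L.Formula ι} (hφ : φ.IsQF) (f : N ↪[L] M)
    (a : ι → N) : φ.Realize (f ∘ a) ↔ φ.Realize a := by
  rw [Formula.Realize, Formula.Realize, ← hφ.realize_embedding f,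
    Subsingleton.elim (f ∘ default)]

lemma sameQFType_comp_embedding (f : N ↪[L] M) (e : N ↪[L] P) (a : ι → N) :
    SameQFType L (f ∘ a) (e ∘ a) := fun _ hφ ↦
  (realize_comp_embedding_iff_of_isQF hφ f a).trans
    (realize_comp_embedding_iff_of_isQF hφ e a).symm

lemma SameQFType.mem_tupleOrbit {a b : ι → M} (hab : SameQFType L a b)
    (ha : ∃ φ : L.Formula ι, φ.IsQF ∧ tupleOrbit L a = {v | φ.Realize v}) :
    b ∈ tupleOrbit L a := by
  obtain ⟨φ, hφ, horbit⟩ := ha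
  have hφa : φ.Realize a := horbit.subset (self_mem_tupleOrbit a)
  exact horbit.superset ((hab φ hφ).1 hφa)

end SameQFType

section Ultrahomogeneous

variable {L : FirstOrder.Language} {M N ι : Type*} [L.Structure M] [L.Structure N]

lemma embedding_eq_of_comp_eq {a : ι → N} (ha : Substructure.closure L (Set.range a) = ⊤)
    {f e : N ↪[L] M} (h : f ∘ a = e ∘ a) : f = e :=
  Embedding.toHom_injective <| Hom.eq_of_eqOn_dense ha <| Set.eqOn_range.2 h

lemma exists_eq_comp_of_mem_tupleOrbit {a : ι → N}
    (ha : Substructure.closure L (Set.range a) = ⊤) {f e : N ↪[L] M}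
    (h : e ∘ a ∈ tupleOrbit L (f ∘ a)) : ∃ g : M ≃[L] M, e = g.toEmbedding.comp f := by
  obtain ⟨g, hg⟩ := h
  exact ⟨g, embedding_eq_of_comp_eq ha hg.symm⟩

lemma isUltrahomogeneous_of_sameQFType_imp_mem_tupleOrbit
    (h : ∀ (n : ℕ) (a b : Fin n → M), SameQFType L a b → b ∈ tupleOrbit L a) :
    L.IsUltrahomogeneous M := by
  intro S hS e
  obtain ⟨n, w, hw⟩ := Substructure.fg_iff_exists_fin_generating_family.1
    (Structure.fg_def.1 ((Substructure.fg_iff_structure_fg S).1 hS))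
  exact exists_eq_comp_of_mem_tupleOrbit hw <|
    h n _ _ (sameQFType_comp_embedding S.subtype e w)

theorem ultrahomogeneous_of_qfFull_general
    (hqffull : ∀ (n : ℕ) (s : Set (Fin n → M)),
      (∀ (g : M ≃[L] M) (v : Fin n → M), v ∈ s ↔ (g ∘ v) ∈ s) →
      ∃ φ : L.Formula (Fin n), φ.IsQF ∧ s = {v | φ.Realize v}) :
    L.IsUltrahomogeneous M :=
  isUltrahomogeneous_of_sameQFType_imp_mem_tupleOrbit fun n a _ hab ↦
    hab.mem_tupleOrbit <| hqffull n (tupleOrbit L a) fun g _ ↦ (comp_mem_tupleOrbit_iff g).symm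

end Ultrahomogeneous

/-- A countable structure (in a language of arbitrary cardinality) that is qf-full —
i.e. every automorphism-invariant subset of `Mⁿ` is definable by a quantifier-free
formula without parameters — is ultrahomogeneous: every isomorphism between finitely
generated substructures extends to an automorphism. -/
theorem ultrahomogeneous_of_qfFull {L : FirstOrder.Language} {M : Type*}
    [L.Structure M] [Countable M]
    (hqffull : ∀ (n : ℕ) (s : Set (Fin n → M)),
      (∀ (g : M ≃[L] M) (v : Fin n → M), v ∈ s ↔ (g ∘ v) ∈ s) →
      ∃ φ : L.Formula (Fin n), φ.IsQF ∧ s = {v | φ.Realize v}) :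
    ∀ (S T : L.Substructure M), S.FG → T.FG → ∀ f : S ≃[L] T,
      ∃ g : M ≃[L] M, ∀ x : S, g (x : M) = ((f x : T) : M) := by
  intro S T hS _ f
  obtain ⟨g, hg⟩ :=
    ultrahomogeneous_of_qfFull_general hqffull S hS (T.subtype.comp f.toEmbedding)
  exact ⟨g, fun x ↦ (DFunLike.congr_fun hg x).symm⟩
end
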